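/- For every n ≥ 2, the set of special unitary matrices with Gaussian-rational entries is dense in SU(n,ℂ): for every n×n complex matrix A with Aᴴ·A = 1 (Aᴴ the conjugate transpose) and det A = 1, and every ε > 0, there exists an n×n complex matrix B with Bᴴ·B = 1, det B = 1, such that every entry of B has rational real part and rational imaginary part, and ‖A − B‖ < ε. -/

import Mathlib

open Matrix

/-!
Let `F` be a topological field in which `2 ≠ 0`, with a continuous involution, and let `K` be a
dense subfield stable under the involution. The Cayley transform `a ↦ (1 - a) (1 + a)⁻¹` is a
rational involution exchanging skew-adjoint matrices and unitary matrices `U` with `1 + U`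
invertible. The skew-adjoint matrices form a linear space, in which those over `K` are dense, so
every unitary `U` with `1 + U` invertible is a limit of unitary matrices over `K`. Any unitary `A`
can be brought into this form by a diagonal sign matrix `D`: expanding
`det ((1 + A) + (1 - A)) = 2 ^ n ≠ 0` row by row gives some `D` with `det (1 + D * A) ≠ 0`.
Finally, multiplying one column of a unitary matrix by the conjugate of its determinant is a
continuous retraction of the unitary group onto the special unitary group, defined over `K`.
-/

open scoped Ring Topology

section OpenUnits

theorem isOpen_setOf_isUnit {M : Type*} [Monoid M] [TopologicalSpace M] [IsOpenUnits M] :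
    IsOpen {a : M | IsUnit a} :=
  IsOpenUnits.isOpenEmbedding_unitsVal.isOpen_range

theorem continuousAt_ringInverse {M : Type*} [MonoidWithZero M] [TopologicalSpace M]
    [IsOpenUnits M] {a : M} (ha : IsUnit a) : ContinuousAt Ring.inverse a := by
  obtain ⟨u, rfl⟩ := ha
  rw [← IsOpenUnits.isOpenEmbedding_unitsVal.continuousAt_iff]
  exact Units.continuous_coe_inv.continuousAt.congr
    (.of_forall fun v ↦ (Ring.inverse_unit v).symm)

end OpenUnits

section Cayley

variable {R : Type*} [Ring R]

/-- The Cayley transform `(1 - a) (1 + a)⁻¹`, used to parametrize unitary elements by skew-adjoint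
ones. Its value is `0` when `1 + a` is not a unit. -/
noncomputable def cayley (a : R) : R := (1 - a) * (1 + a)⁻¹ʳ

theorem one_add_cayley {a : R} (ha : IsUnit (1 + a)) : 1 + cayley a = 2 * (1 + a)⁻¹ʳ := by
  calc 1 + cayley a = (1 + a) * (1 + a)⁻¹ʳ + (1 - a) * (1 + a)⁻¹ʳ := by
        rw [Ring.mul_inverse_cancel _ ha, cayley]
    _ = 2 * (1 + a)⁻¹ʳ := by rw [← add_mul, add_add_sub_cancel, one_add_one_eq_two]

theorem one_sub_cayley {a : R} (ha : IsUnit (1 + a)) : 1 - cayley a = a * (1 + cayley a) := by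
  calc 1 - cayley a = (1 + a) * (1 + a)⁻¹ʳ - (1 - a) * (1 + a)⁻¹ʳ := by
        rw [Ring.mul_inverse_cancel _ ha, cayley]
    _ = a * (2 * (1 + a)⁻¹ʳ) := by noncomm_ring
    _ = a * (1 + cayley a) := by rw [one_add_cayley ha]

theorem isUnit_one_add_cayley (h2 : IsUnit (2 : R)) {a : R} (ha : IsUnit (1 + a)) :
    IsUnit (1 + cayley a) := by
  rw [one_add_cayley ha]
  exact h2.mul ha.ringInverse

theorem cayley_cayley (h2 : IsUnit (2 : R)) {a : R} (ha : IsUnit (1 + a)) :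
    cayley (cayley a) = a := by
  rw [cayley, one_sub_cayley ha, Ring.mul_inverse_cancel_right _ _ (isUnit_one_add_cayley h2 ha)]

theorem cayley_mem_subring {S : Subring R} (hinv : ∀ x ∈ S, x⁻¹ʳ ∈ S) {a : R} (ha : a ∈ S) :
    cayley a ∈ S :=
  mul_mem (sub_mem (one_mem S) ha) (hinv _ (add_mem (one_mem S) ha))

theorem continuousAt_cayley [TopologicalSpace R] [IsTopologicalRing R] [IsOpenUnits R] {a : R}
    (ha : IsUnit (1 + a)) : ContinuousAt cayley a :=
  (continuousAt_const.sub continuousAt_id).mul <|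
    (continuousAt_ringInverse ha).comp (continuousAt_const.add continuousAt_id)

variable [StarRing R]

theorem star_cayley (a : R) : star (cayley a) = (1 + star a)⁻¹ʳ * (1 - star a) := by
  rw [cayley, star_mul, ← Ring.inverse_star, star_add, star_sub, star_one]

theorem cayley_mem_unitary {y : R} (hy : y ∈ skewAdjoint R) (h : IsUnit (1 + y)) :
    cayley y ∈ unitary R := by
  rw [skewAdjoint.mem_iff] at hy
  have h' : IsUnit (1 - y) := by simpa [hy, sub_eq_add_neg] using h.star
  refine (h'.mul h.ringInverse).mem_unitary_of_star_mul_self ?_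
  have hcomm : (1 + y) * (1 - y) = (1 - y) * (1 + y) := by noncomm_ring
  calc star (cayley y) * cayley y
      = (1 - y)⁻¹ʳ * ((1 + y) * (1 - y)) * (1 + y)⁻¹ʳ := by
        rw [star_cayley, hy, ← sub_eq_add_neg, sub_neg_eq_add, cayley]
        simp only [mul_assoc]
    _ = 1 := by
        rw [hcomm, Ring.inverse_mul_cancel_left _ _ h', Ring.mul_inverse_cancel _ h]

theorem cayley_mem_skewAdjoint {u : R} (hu : u ∈ unitary R) (h : IsUnit (1 + u)) :
    cayley u ∈ skewAdjoint R := by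
  have h' : IsUnit (1 + star u) := by simpa using h.star
  have hswap : (1 - star u) * (1 + u) = (1 + star u) * -(1 - u) := by
    simp only [mul_add, mul_sub, mul_neg, add_mul, sub_mul, Unitary.star_mul_self_of_mem hu,
      one_mul, mul_one]
    abel
  rw [skewAdjoint.mem_iff, star_cayley, cayley, ← neg_mul, Ring.eq_mul_inverse_iff_mul_eq _ _ _ h,
    mul_assoc, hswap, Ring.inverse_mul_cancel_left _ _ h']

variable [TopologicalSpace R] [IsTopologicalRing R] [ContinuousStar R]

theorem mem_closure_skewAdjoint_inter {S : Subring R} (hS : Dense (S : Set R))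
    (hstar : ∀ x ∈ S, star x ∈ S) (h2 : IsUnit (2 : R)) {y : R} (hy : y ∈ skewAdjoint R) :
    y ∈ closure (skewAdjoint R ∩ S : Set R) := by
  rw [skewAdjoint.mem_iff] at hy
  have hcomm : 2⁻¹ʳ * y = y * 2⁻¹ʳ := by
    rw [← Ring.mul_inverse_cancel_right _ (2⁻¹ʳ * y) h2, mul_assoc _ y, mul_two, ← two_mul,
      Ring.inverse_mul_cancel_left _ _ h2]
  have hhalf : y * 2⁻¹ʳ - star (y * 2⁻¹ʳ) = y := by
    rw [star_mul, hy, ← Ring.inverse_star, star_ofNat, mul_neg, sub_neg_eq_add, hcomm, ← mul_two,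
      Ring.inverse_mul_cancel_right _ _ h2]
  rw [← hhalf]
  refine map_mem_closure (f := fun x ↦ x - star x) (continuous_id.sub continuous_star) (hS _)
    fun x hx ↦ ⟨?_, sub_mem hx (hstar x hx)⟩
  simp [skewAdjoint.mem_iff]

theorem mem_closure_unitary_inter_of_isUnit_one_add [IsOpenUnits R] {S : Subring R}
    (hS : Dense (S : Set R)) (hstar : ∀ x ∈ S, star x ∈ S) (hinv : ∀ x ∈ S, x⁻¹ʳ ∈ S)
    (h2 : IsUnit (2 : R)) {u : R} (hu : u ∈ unitary R) (h : IsUnit (1 + u)) :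
    u ∈ closure (unitary R ∩ S : Set R) := by
  have hunit : IsUnit (1 + cayley u) := isUnit_one_add_cayley h2 h
  have hskew : ∃ᶠ y in 𝓝 (cayley u), y ∈ (skewAdjoint R ∩ S : Set R) :=
    mem_closure_iff_frequently.1 <|
      mem_closure_skewAdjoint_inter hS hstar h2 (cayley_mem_skewAdjoint hu h)
  have hev : ∀ᶠ y in 𝓝 (cayley u), IsUnit (1 + y) :=
    (isOpen_setOf_isUnit.preimage (continuous_const_add 1)).mem_nhds hunit
  have htendsto : Filter.Tendsto cayley (𝓝 (cayley u)) (𝓝 u) := by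
    simpa only [cayley_cayley h2 h] using (continuousAt_cayley hunit).tendsto
  refine mem_closure_of_frequently_of_tendsto ((hskew.and_eventually hev).mono ?_) htendsto
  rintro y ⟨⟨hy, hyS⟩, hyu⟩
  exact ⟨cayley_mem_unitary hy hyu, cayley_mem_subring hinv hyS⟩

end Cayley

section MatrixSubring

variable {n R : Type*} [Fintype n] [DecidableEq n] [CommRing R]

theorem det_mem_subring {S : Subring R} {M : Matrix n n R} (hM : M ∈ S.matrix) : M.det ∈ S := by
  rw [det_apply']
  exact sum_mem fun σ _ ↦ mul_mem (intCast_mem S _) (prod_mem fun i _ ↦ hM _ _)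

theorem diagonal_mem_matrix {S : Subring R} {d : n → R} (hd : ∀ i, d i ∈ S) :
    diagonal d ∈ S.matrix := fun i j ↦ by
  rw [diagonal_apply]
  split_ifs
  exacts [hd i, zero_mem S]

theorem star_mem_matrix [StarRing R] {S : Subring R} (hstar : ∀ x ∈ S, star x ∈ S)
    {M : Matrix n n R} (hM : M ∈ S.matrix) : star M ∈ S.matrix :=
  fun i j ↦ hstar _ (hM j i)

theorem ringInverse_mem_matrix {F : Type*} [Field F] {K : Subfield F} {M : Matrix n n F}
    (hM : M ∈ K.toSubring.matrix) : M⁻¹ʳ ∈ K.toSubring.matrix := by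
  obtain ⟨N, rfl⟩ : ∃ N : Matrix n n K, K.subtype.mapMatrix N = M :=
    ⟨of fun i j ↦ ⟨M i j, hM i j⟩, rfl⟩
  have hinv : (K.subtype.mapMatrix N)⁻¹ = K.subtype.mapMatrix N⁻¹ := by
    rw [inv_def, inv_def, ← RingHom.map_det, ← RingHom.map_adjugate, Ring.inverse_eq_inv',
      Ring.inverse_eq_inv', ← map_inv₀]
    ext i j
    exact (map_mul K.subtype _ _).symm
  rw [← nonsing_inv_eq_ringInverse, hinv]
  exact fun i j ↦ (N⁻¹ i j).2

end MatrixSubring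

section MatrixTopology

theorem dense_matrix {m n R : Type*} [TopologicalSpace R] {s : Set R} (hs : Dense s) :
    Dense (s.matrix : Set (Matrix m n R)) := by
  rw [Set.matrix_eq_pi]
  exact dense_pi _ fun _ _ ↦ dense_pi _ fun _ _ ↦ hs

instance {n R : Type*} [Fintype n] [DecidableEq n] [CommRing R] [TopologicalSpace R]
    [IsTopologicalRing R] [IsOpenUnits R] : IsOpenUnits (Matrix n n R) where
  isOpenEmbedding_unitsVal := by
    refine ⟨Units.isEmbedding_val_mk' (f := Inv.inv) (fun M hM ↦ ?_) fun U ↦ ?_, ?_⟩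
    · exact (continuousAt_matrix_inv M <| continuousAt_ringInverse <|
        (isUnit_iff_isUnit_det M).1 hM).continuousWithinAt
    · exact (coe_units_inv U).symm
    · have h : Set.range ((↑) : (Matrix n n R)ˣ → Matrix n n R) = det ⁻¹' {a | IsUnit a} :=
        Set.ext isUnit_iff_isUnit_det
      rw [h]
      exact isOpen_setOf_isUnit.preimage continuous_id.matrix_det

open scoped Matrix.Norms.Elementwise in
theorem exists_forall_norm_sub_lt_of_mem_closure {m n E : Type*} [Finite m] [Finite n]
    [SeminormedAddCommGroup E] {A : Matrix m n E} {s : Set (Matrix m n E)} (hA : A ∈ closure s)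
    {ε : ℝ} (hε : 0 < ε) : ∃ B ∈ s, ∀ i j, ‖A i j - B i j‖ < ε := by
  cases nonempty_fintype m
  cases nonempty_fintype n
  obtain ⟨B, hB, hAB⟩ := Metric.mem_closure_iff.1 hA ε hε
  rw [dist_eq_norm, Matrix.norm_lt_iff hε] at hAB
  exact ⟨B, hB, hAB⟩

end MatrixTopology

section Unitary

variable {n R : Type*} [Fintype n] [DecidableEq n] [CommRing R]

theorem exists_sign_det_one_add_diagonal_mul_ne_zero [NoZeroDivisors R] [NeZero (2 : R)]
    (M : Matrix n n R) :
    ∃ d : n → R, (∀ i, d i = 1 ∨ d i = -1) ∧ (1 + diagonal d * M).det ≠ 0 := by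
  have hsum : ∑ s : Finset n, (of (s.piecewise (1 + M).row (1 - M).row)).det =
      2 ^ Fintype.card n := by
    calc ∑ s : Finset n, (of (s.piecewise (1 + M).row (1 - M).row)).det
        = ((1 + M) + (1 - M)).det :=
          (detRowAlternating.toMultilinearMap.map_add_univ (1 + M).row (1 - M).row).symm
      _ = ((2 : R) • (1 : Matrix n n R)).det := by rw [add_add_sub_cancel, two_smul]
      _ = 2 ^ Fintype.card n := by rw [det_smul, det_one, mul_one]
  have : Nontrivial R := ⟨2, 0, two_ne_zero⟩
  obtain ⟨s, -, hs⟩ := Finset.exists_ne_zero_of_sum_ne_zero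
    (hsum.trans_ne (pow_ne_zero _ two_ne_zero))
  refine ⟨s.piecewise 1 (-1), fun i ↦ ?_, ?_⟩
  · by_cases hi : i ∈ s <;> simp [hi]
  · convert hs using 2
    ext i j
    by_cases hi : i ∈ s <;> simp [hi, Finset.piecewise, row, sub_eq_add_neg]

variable [StarRing R]

theorem diagonal_mem_unitaryGroup {d : n → R} (hd : ∀ i, d i ∈ unitary R) :
    diagonal d ∈ unitaryGroup n R := by
  rw [mem_unitaryGroup_iff, star_eq_conjTranspose, diagonal_conjTranspose, diagonal_mul_diagonal,
    ← diagonal_one]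
  exact congrArg diagonal (funext fun i ↦ Unitary.mul_star_self_of_mem (hd i))

/-- Rescaling of the column `i` of `V` by the conjugate of `det V`: a retraction of the unitary
group onto the special unitary group. -/
def normalizeDet (i : n) (V : Matrix n n R) : Matrix n n R :=
  V * diagonal (Pi.mulSingle i (star V.det))

theorem normalizeDet_of_det_eq_one (i : n) {V : Matrix n n R} (hV : V.det = 1) :
    normalizeDet i V = V := by
  simp [normalizeDet, hV]

theorem normalizeDet_mem_specialUnitaryGroup (i : n) {V : Matrix n n R}
    (hV : V ∈ unitaryGroup n R) : normalizeDet i V ∈ specialUnitaryGroup n R := by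
  have hdet : V.det ∈ unitary R := det_of_mem_unitary hV
  refine mem_specialUnitaryGroup_iff.2 ⟨mul_mem hV (diagonal_mem_unitaryGroup fun j ↦ ?_), ?_⟩
  · rw [Pi.mulSingle_apply]
    split_ifs
    exacts [Unitary.star_mem hdet, one_mem _]
  · rw [normalizeDet, det_mul, det_diagonal, Finset.prod_pi_mulSingle',
      if_pos (Finset.mem_univ i), Unitary.mul_star_self_of_mem hdet]

theorem normalizeDet_mem_matrix (i : n) {S : Subring R} (hstar : ∀ x ∈ S, star x ∈ S)
    {V : Matrix n n R} (hV : V ∈ S.matrix) : normalizeDet i V ∈ S.matrix :=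
  mul_mem hV <| diagonal_mem_matrix fun j ↦ by
    rw [Pi.mulSingle_apply]
    split_ifs
    exacts [hstar _ (det_mem_subring hV), one_mem S]

theorem continuous_normalizeDet [TopologicalSpace R] [IsTopologicalRing R] [ContinuousStar R]
    (i : n) : Continuous (normalizeDet i : Matrix n n R → Matrix n n R) :=
  continuous_id.mul ((continuous_mulSingle i).comp continuous_id.matrix_det.star).matrix_diagonal

end Unitary

section AdjoinI

/-- The subfield `k(i)` of `ℂ` generated by `i` and a subfield `k` of `ℝ`. For `k = ℚ` these are
the Gaussian rationals. -/
def adjoinI (k : Subfield ℝ) : Subfield ℂ where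
  carrier := {z | z.re ∈ k ∧ z.im ∈ k}
  mul_mem' ha hb :=
    ⟨sub_mem (mul_mem ha.1 hb.1) (mul_mem ha.2 hb.2),
      add_mem (mul_mem ha.1 hb.2) (mul_mem ha.2 hb.1)⟩
  one_mem' := ⟨one_mem k, zero_mem k⟩
  add_mem' ha hb := ⟨add_mem ha.1 hb.1, add_mem ha.2 hb.2⟩
  zero_mem' := ⟨zero_mem k, zero_mem k⟩
  neg_mem' ha := ⟨neg_mem ha.1, neg_mem ha.2⟩
  inv_mem' z hz := by
    have hnorm : Complex.normSq z ∈ k := add_mem (mul_mem hz.1 hz.1) (mul_mem hz.2 hz.2)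
    rw [Set.mem_ofPred_eq, Complex.inv_re, Complex.inv_im]
    exact ⟨div_mem hz.1 hnorm, div_mem (neg_mem hz.2) hnorm⟩

variable {k : Subfield ℝ} {z : ℂ}

theorem mem_adjoinI : z ∈ adjoinI k ↔ z.re ∈ k ∧ z.im ∈ k :=
  Iff.rfl

theorem star_mem_adjoinI (hz : z ∈ adjoinI k) : star z ∈ adjoinI k :=
  mem_adjoinI.2 ⟨hz.1, neg_mem hz.2⟩

theorem dense_adjoinI (hk : Dense (k : Set ℝ)) : Dense (adjoinI k : Set ℂ) := fun z ↦ by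
  have h : z ∈ closure ((k : Set ℝ) ×ℂ k) := by
    rw [Complex.closure_reProdIm]
    exact ⟨hk z.re, hk z.im⟩
  exact h

end AdjoinI

section Density

variable {n F : Type*} [Fintype n] [DecidableEq n] [Field F] [NeZero (2 : F)] [StarRing F]
  [TopologicalSpace F] [IsTopologicalDivisionRing F] [T1Space F] [ContinuousStar F]
  {K : Subfield F}

theorem unitaryGroup_subset_closure_inter_matrix (hK : Dense (K : Set F))
    (hstar : ∀ x ∈ K, star x ∈ K) :
    (unitaryGroup n F : Set (Matrix n n F)) ⊆
      closure (unitaryGroup n F ∩ (K.toSubring.matrix : Subring (Matrix n n F))) := by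
  intro A hA
  obtain ⟨d, hd, hdet⟩ := exists_sign_det_one_add_diagonal_mul_ne_zero A
  have hD : diagonal d ∈ unitaryGroup n F := diagonal_mem_unitaryGroup fun i ↦ by
    rcases hd i with h | h <;> simp [h, Unitary.mem_iff]
  have hDK : diagonal d ∈ K.toSubring.matrix := diagonal_mem_matrix fun i ↦ by
    rcases hd i with h | h <;> simp [h]
  have hDD : diagonal d * diagonal d = 1 := by
    rw [diagonal_mul_diagonal, ← diagonal_one]
    exact congrArg diagonal (funext fun i ↦ mul_self_eq_one_iff.2 (hd i))
  have h2 : IsUnit (2 : Matrix n n F) := by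
    simpa only [map_ofNat] using
      (IsUnit.mk0 (2 : F) two_ne_zero).map (algebraMap F (Matrix n n F))
  have hKdense : Dense ((K.toSubring.matrix : Subring (Matrix n n F)) : Set (Matrix n n F)) :=
    dense_matrix hK
  have hDA := mem_closure_unitary_inter_of_isUnit_one_add hKdense
    (fun _ ↦ star_mem_matrix hstar) (fun _ ↦ ringInverse_mem_matrix) h2 (mul_mem hD hA)
    ((isUnit_iff_isUnit_det _).2 hdet.isUnit)
  rw [← one_mul A, ← hDD, mul_assoc]
  exact map_mem_closure (continuous_const_mul (diagonal d)) hDA fun B hB ↦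
    ⟨mul_mem hD hB.1, mul_mem hDK hB.2⟩

theorem su_gaussian_rational_dense_general (hK : Dense (K : Set F))
    (hstar : ∀ x ∈ K, star x ∈ K) :
    (specialUnitaryGroup n F : Set (Matrix n n F)) ⊆
      closure (specialUnitaryGroup n F ∩ (K.toSubring.matrix : Subring (Matrix n n F))) := by
  intro A hA
  cases isEmpty_or_nonempty n with
  | inl _ => exact subset_closure ⟨hA, fun i ↦ isEmptyElim i⟩
  | inr h =>
    obtain ⟨i⟩ := h
    rw [← normalizeDet_of_det_eq_one i hA.2]
    exact map_mem_closure (continuous_normalizeDet i)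
      (unitaryGroup_subset_closure_inter_matrix hK hstar hA.1) fun B hB ↦
        ⟨normalizeDet_mem_specialUnitaryGroup i hB.1, normalizeDet_mem_matrix i hstar hB.2⟩

end Density

/-- For every `n ≥ 2`, the special unitary matrices with Gaussian-rational entries are
dense in `SU(n, ℂ)`: given `A` with `Aᴴ * A = 1` and `det A = 1`, and `ε > 0`, there is
`B` with `Bᴴ * B = 1`, `det B = 1`, each entry of `B` having rational real and imaginary
parts, and every entry of `A - B` of norm less than `ε`. -/
theorem su_gaussian_rational_dense (n : ℕ) (hn : 2 ≤ n)
    (A : Matrix (Fin n) (Fin n) ℂ) (hA : Aᴴ * A = 1) (hdetA : A.det = 1)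
    (ε : ℝ) (hε : 0 < ε) :
    ∃ B : Matrix (Fin n) (Fin n) ℂ,
      Bᴴ * B = 1 ∧ B.det = 1 ∧
      (∀ i j, (∃ q : ℚ, (B i j).re = (q : ℝ)) ∧ ∃ q : ℚ, (B i j).im = (q : ℝ)) ∧
      ∀ i j, ‖A i j - B i j‖ < ε := by
  have hℚ : Dense ((Rat.castHom ℝ).fieldRange : Set ℝ) := Rat.denseRange_cast
  obtain ⟨B, ⟨⟨hB, hdetB⟩, hBℚ⟩, hAB⟩ := exists_forall_norm_sub_lt_of_mem_closure
    (su_gaussian_rational_dense_general (dense_adjoinI hℚ) (fun _ ↦ star_mem_adjoinI)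
      ⟨mem_unitaryGroup_iff'.2 hA, hdetA⟩) hε
  exact ⟨B, mem_unitaryGroup_iff'.1 hB, hdetB,
    fun i j ↦ (mem_adjoinI.1 (hBℚ i j)).imp (.imp fun _ ↦ Eq.symm) (.imp fun _ ↦ Eq.symm), hAB⟩
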